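/- Let Ω be a finite nonempty set and σ a selection function on Ω. If σ satisfies (S1), (S2), (S3), (S4ₙ) for every n ≥ 1, and the (Scott) axiom — whenever (A_i)_{i≤n} ≡₀ (B_i)_{i≤n} and A_i ⪰*_σ B_i for all i ≤ n, then A_i ⪯*_σ B_i for all i ≤ n — then there exists a regular probability measure μ on Ω that represents σ for threshold 1/2. Conversely, if μ is a regular probability measure on Ω and μ represents σ for threshold 1/2, then σ satisfies (S1), (S2), (S3), (S4ₙ) for every n ≥ 1, and the (Scott) axiom. -/

import Mathlib

open Finset

variable {Ω : Type*}

/-- The measure of a finite set of states given weights `w`: `μ(A) = ∑_{ω ∈ A} w ω`. -/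
noncomputable def mea (w : Ω → ℝ) (A : Finset Ω) : ℝ := ∑ ω ∈ A, w ω

/-- `w` is a probability weight function: nonnegative and summing to 1. -/
def IsProbWeight [Fintype Ω] (w : Ω → ℝ) : Prop :=
  (∀ ω, 0 ≤ w ω) ∧ (∑ ω, w ω) = 1

/-- The measure is regular: only the empty set has measure 0. -/
def RegularW (w : Ω → ℝ) : Prop := ∀ X : Finset Ω, mea w X = 0 → X = ∅

/-- Conditional measure `μ_A(X) = μ(A ∩ X) / μ(A)`. -/
noncomputable def condMea [DecidableEq Ω] (w : Ω → ℝ) (A X : Finset Ω) : ℝ := mea w (A ∩ X) / mea w A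

/-- `X` is `(m,t)`-stable for a set function `m`: `X` is nonempty and for every `E` with
`X ∩ E ≠ ∅` and `m E > 0`, `m (X ∩ E) / m E > t`. -/
def StableFor [DecidableEq Ω] (m : Finset Ω → ℝ) (t : ℝ) (X : Finset Ω) : Prop :=
  X.Nonempty ∧ ∀ E : Finset Ω, (X ∩ E).Nonempty → 0 < m E → t < m (X ∩ E) / m E

/-- `S` is the `⊆`-least `(m,t)`-stable set. -/
def IsLeastStable [DecidableEq Ω] (m : Finset Ω → ℝ) (t : ℝ) (S : Finset Ω) : Prop :=
  StableFor m t S ∧ ∀ X : Finset Ω, StableFor m t X → S ⊆ X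

/-- `w` represents the selection function `σ` for threshold `t`. -/
def RepresentsAt [DecidableEq Ω] (w : Ω → ℝ) (t : ℝ) (σ : Finset Ω → Finset Ω) : Prop :=
  ∀ E : Finset Ω, (0 < mea w E → IsLeastStable (condMea w E) t (σ E)) ∧
    (mea w E = 0 → σ E = ∅)

/-- Selection axiom (S1): `σ(X) = ∅` only if `X = ∅`. -/
def SelA1 (σ : Finset Ω → Finset Ω) : Prop := ∀ X : Finset Ω, σ X = ∅ → X = ∅

/-- Selection axiom (S2): `σ(X) ⊆ X`. -/
def SelA2 (σ : Finset Ω → Finset Ω) : Prop := ∀ X : Finset Ω, σ X ⊆ X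

/-- Selection axiom (S3): if `σ(A) ∩ B ≠ ∅` then `σ(A ∩ B) ⊆ σ(A) ∩ B`. -/
def SelA3 [DecidableEq Ω] (σ : Finset Ω → Finset Ω) : Prop :=
  ∀ A B : Finset Ω, (σ A ∩ B).Nonempty → σ (A ∩ B) ⊆ σ A ∩ B

/-- Selection axiom (S4ₙ) for every `n`: if `σ(A ∪ Xᵢ) = Xᵢ` for all `i`, then
`σ(A ∪ ⋃ᵢ Xᵢ) ⊆ ⋃ᵢ Xᵢ`. -/
def SelA4 [DecidableEq Ω] (σ : Finset Ω → Finset Ω) : Prop :=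
  ∀ n : ℕ, ∀ A : Finset Ω, ∀ X : Fin (n + 1) → Finset Ω,
    (∀ i, σ (A ∪ X i) = X i) →
    σ (A ∪ univ.biUnion X) ⊆ univ.biUnion X

/-- `ω ≻_σ X` iff `ω ∉ X` and `σ (X ∪ {ω}) = {ω}`. -/
def succS [DecidableEq Ω] (σ : Finset Ω → Finset Ω) (ω : Ω) (X : Finset Ω) : Prop :=
  ω ∉ X ∧ σ (X ∪ {ω}) = {ω}

/-- `X ⪰_σ ω` iff `ω ∈ X` or `σ (X ∪ {ω}) ≠ {ω}`. -/
def succeqS [DecidableEq Ω] (σ : Finset Ω → Finset Ω) (X : Finset Ω) (ω : Ω) : Prop :=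
  ω ∈ X ∨ σ (X ∪ {ω}) ≠ {ω}

/-- `A ⪰*_σ B` iff either `A` is a singleton `{a}` with `a ≻_σ B`, or `B` is a singleton
`{b}` with `A ⪰_σ b`. -/
def geStar [DecidableEq Ω] (σ : Finset Ω → Finset Ω) (A B : Finset Ω) : Prop :=
  (∃ a, A = {a} ∧ succS σ a B) ∨ (∃ b, B = {b} ∧ succeqS σ A b)

/-- Two sequences of sets are balanced: every state occurs in exactly as many `A i`'s
as `B i`'s. -/
def BalancedSeq {n : ℕ} (A B : Fin n → Finset Ω) : Prop :=
  ∀ ω : Ω, Nat.card {i // ω ∈ A i} = Nat.card {i // ω ∈ B i}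

/-- `(A_i) ≤₀ (B_i)`: every state occurs in at most as many `A i`'s as `B i`'s. -/
def DomSeq {n : ℕ} (A B : Fin n → Finset Ω) : Prop :=
  ∀ ω : Ω, Nat.card {i // ω ∈ A i} ≤ Nat.card {i // ω ∈ B i}

/-- The (Scott) axiom for the induced order `⪰*_σ`. -/
def ScottAx [DecidableEq Ω] (σ : Finset Ω → Finset Ω) : Prop :=
  ∀ n : ℕ, ∀ A B : Fin (n + 1) → Finset Ω, BalancedSeq A B →
    (∀ i, geStar σ (A i) (B i)) → ∀ i, geStar σ (B i) (A i)

/-! For a regular measure `μ` and nonempty `X ⊆ E`, the set `X` is `(μ_E, t)`-stable iff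
`t * μ(E \ X) < (1 - t) * μ({x})` for every `x ∈ X`: the worst test set is a single state of `X`
together with everything outside `X`. At `t = 1/2` this says that each `x ∈ X` alone outweighs
`E \ X`, so representing `σ` amounts to representing the order `≻_σ` by
`ω ≻_σ X ↔ μ(X) < μ({ω})`, the structural axioms identifying `σ(E)` as the least such `X`.

The conditions `A ⪰*_σ B → μ(B) ≤ μ(A)`, strict where `B ⪰*_σ A` fails, form a homogeneous linear
system with integer coefficients in the weights. By Farkas' lemma over `ℚ` it is solvable unless
some multiset of the inequalities, one of them strict, adds up to `0 ≤ 0`. Such a multiset is a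
balanced pair of sequences violating Scott's axiom.

Conversely, balanced sequences have equal total mass, so if `A i ⪰*_σ B i` for all `i`, then every
`μ(B i) ≤ μ(A i)` is an equality. None of these relations is then strict, hence each `B i` is a
singleton, and by counting so is each `A i`; this makes every relation reversible.
-/

section Farkas

variable {ι K V : Type*} [Field K] [LinearOrder K] [IsStrictOrderedRing K]
  [AddCommGroup V] [Module K V]

theorem nonneg_apply_of_mem_hull {s : Set (Module.Dual K V)} {x : V} (hx : ∀ f ∈ s, 0 ≤ f x)
    {f : Module.Dual K V} (hf : f ∈ PointedCone.hull K s) : 0 ≤ f x := by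
  have hx_dual : x ∈ PointedCone.dual .id (PointedCone.hull K s : Set (Module.Dual K V)) := by
    rw [PointedCone.dual_hull]
    exact hx
  exact hx_dual hf

theorem mem_hull_insert_of_transvection_mem_hull {s : Set (Module.Dual K V)}
    {f b : Module.Dual K V} {z : V} (hs : ∀ g ∈ s, 0 ≤ g z) (hb : b z ≤ 0)
    (h : LinearMap.transvection (Module.Dual.eval K V z) f b ∈
      PointedCone.hull K (LinearMap.transvection (Module.Dual.eval K V z) f '' s)) :
    b ∈ PointedCone.hull K (insert f s) := by
  set φ := LinearMap.transvection (Module.Dual.eval K V z) f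
  obtain ⟨g, hg, hgb : φ g = φ b⟩ : φ b ∈ (PointedCone.hull K s).map φ := by
    rwa [PointedCone.map, Submodule.map_span]
  have hbg : b = (g z - b z) • f + g := by
    simp only [φ, LinearMap.transvection.apply, Module.Dual.eval_apply] at hgb
    linear_combination (norm := module) -hgb
  have hcoeff : 0 ≤ g z - b z := sub_nonneg.2 (hb.trans (nonneg_apply_of_mem_hull hs hg))
  exact Submodule.mem_span_insert.2 ⟨⟨g z - b z, hcoeff⟩, g, hg, hbg⟩

theorem exists_apply_eq_neg_one {s : Set (Module.Dual K V)} {f b : Module.Dual K V} {y : V}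
    (hs : ∀ g ∈ s, 0 ≤ g y) (hb : b y < 0) (hf : f y < 0) :
    ∃ z, (∀ g ∈ s, 0 ≤ g z) ∧ b z < 0 ∧ f z = -1 := by
  have hpos : 0 < (-f y)⁻¹ := inv_pos.2 (neg_pos.2 hf)
  refine ⟨(-f y)⁻¹ • y, fun g hg => ?_, ?_, ?_⟩ <;> rw [map_smul, smul_eq_mul]
  · exact mul_nonneg hpos.le (hs g hg)
  · exact mul_neg_of_pos_of_neg hpos hb
  · rw [inv_neg, neg_mul, inv_mul_cancel₀ hf.ne]

-- Bartl's algebraic induction. Separation theorems would only give real coefficients, and Scott's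
-- axiom needs rational ones.
theorem farkas (s : Finset ι) (a : ι → Module.Dual K V) (b : Module.Dual K V)
    (h : ∀ x, (∀ i ∈ s, 0 ≤ a i x) → 0 ≤ b x) : b ∈ PointedCone.hull K (a '' s) := by
  classical
  induction s using Finset.induction_on generalizing a b with
  | empty =>
    have hb : b = 0 := by
      ext x
      have hneg := h (-x) (by simp)
      rw [map_neg] at hneg
      exact le_antisymm (neg_nonneg.1 hneg) (h x (by simp))
    exact hb ▸ zero_mem _
  | insert m s _ ih =>
    by_cases hb : ∀ x, (∀ i ∈ s, 0 ≤ a i x) → 0 ≤ b x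
    · exact Submodule.span_mono (Set.image_mono (by simp)) (ih a b hb)
    push Not at hb
    obtain ⟨y, hy, hby⟩ := hb
    have hmy : a m y < 0 := by
      by_contra! hmy
      exact hby.not_ge (h y (by simpa [hmy] using hy))
    obtain ⟨z, hz, hbz, hmz⟩ := exists_apply_eq_neg_one (Set.forall_mem_image.2 hy) hby hmy
    -- `φ f` is `f` composed with the projection onto the kernel of `a m` along `z`.
    set φ := LinearMap.transvection (Module.Dual.eval K V z) (a m) with hφ_def
    have hφ (f x) : φ f x = f (x + a m x • z) := by
      simp [hφ_def, LinearMap.transvection.apply, mul_comm]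
    rw [Finset.coe_insert, Set.image_insert_eq]
    refine mem_hull_insert_of_transvection_mem_hull hz hbz.le ?_
    rw [← Set.image_comp]
    refine ih (φ ∘ a) (φ b) fun x hx => ?_
    rw [hφ]
    refine h _ fun i hi => ?_
    obtain rfl | hi := Finset.mem_insert.1 hi
    · simp [hmz]
    · simpa [hφ] using hx i hi

theorem exists_nsmul_eq_sum_map_of_mem_hull [Module ℚ V] {a : ι → V} {f : V}
    (hf : f ∈ PointedCone.hull ℚ (Set.range a)) :
    ∃ n : ℕ, 0 < n ∧ ∃ M : Multiset ι, n • f = (M.map a).sum := by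
  induction hf using Submodule.span_induction with
  | mem f hf =>
    obtain ⟨i, rfl⟩ := hf
    exact ⟨1, one_pos, {i}, by simp⟩
  | zero => exact ⟨1, one_pos, 0, by simp⟩
  | add f g _ _ hf hg =>
    obtain ⟨m, hm, M, hM⟩ := hf
    obtain ⟨n, hn, N, hN⟩ := hg
    refine ⟨m * n, mul_pos hm hn, n • M + m • N, ?_⟩
    rw [Multiset.map_add, Multiset.map_nsmul, Multiset.map_nsmul, Multiset.sum_add,
      Multiset.sum_nsmul, Multiset.sum_nsmul, ← hM, ← hN]
    module
  | smul r f _ hf =>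
    obtain ⟨n, hn, M, hM⟩ := hf
    obtain ⟨k, hk⟩ := Int.eq_ofNat_of_zero_le (Rat.num_nonneg.2 r.2)
    have hr : (r.1.den : ℚ) * r = k := by rw [Rat.den_mul_eq_num, hk]; rfl
    refine ⟨n * r.1.den, mul_pos hn r.1.den_pos, k • M, ?_⟩
    rw [Multiset.map_nsmul, Multiset.sum_nsmul, ← hM, ← Nonneg.coe_smul,
      ← Nat.cast_smul_eq_nsmul ℚ, ← Nat.cast_smul_eq_nsmul ℚ k, ← hr]
    module

theorem exists_forall_nonneg_and_forall_pos [Module ℚ V] [Finite ι] (a : ι → Module.Dual ℚ V)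
    (strict : Set ι) (h : ∀ M : Multiset ι, (M.map a).sum = 0 → ∀ i ∈ M, i ∉ strict) :
    ∃ x, (∀ i, 0 ≤ a i x) ∧ ∀ i ∈ strict, 0 < a i x := by
  cases nonempty_fintype ι
  have hsep (i : ι) : ∃ x, (∀ j, 0 ≤ a j x) ∧ (i ∈ strict → 0 < a i x) := by
    by_contra! hcon
    have hcone : -a i ∈ PointedCone.hull ℚ (Set.range a) := by
      have := farkas univ a (-a i) fun x hx => by
        simpa using (hcon x fun j => hx j (mem_univ j)).2
      rwa [coe_univ, Set.image_univ] at this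
    obtain ⟨n, hn, M, hM⟩ := exists_nsmul_eq_sum_map_of_mem_hull hcone
    refine h (n • {i} + M) ?_ i ?_ (hcon 0 (by simp)).1
    · rw [Multiset.map_add, Multiset.sum_add, ← hM, Multiset.map_nsmul, Multiset.sum_nsmul]
      simp
    · simp [hn.ne']
  choose x hx hx_strict using hsep
  refine ⟨∑ i, x i, fun j => ?_, fun j hj => ?_⟩ <;> rw [map_sum]
  · exact sum_nonneg fun i _ => hx i j
  · exact sum_pos' (fun i _ => hx i j) ⟨j, mem_univ j, hx_strict j hj⟩

end Farkas

section Measure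

variable {w : Ω → ℝ} {A B : Finset Ω}

theorem mea_singleton (w : Ω → ℝ) (ω : Ω) : mea w {ω} = w ω := sum_singleton w ω

theorem mea_smul (c : ℝ) (w : Ω → ℝ) (A : Finset Ω) : mea (c • w) A = c * mea w A :=
  (mul_sum A w c).symm

theorem mea_nonneg (hw : ∀ ω, 0 ≤ w ω) (A : Finset Ω) : 0 ≤ mea w A :=
  sum_nonneg fun ω _ => hw ω

theorem mea_mono (hw : ∀ ω, 0 ≤ w ω) (h : A ⊆ B) : mea w A ≤ mea w B :=
  sum_le_sum_of_subset_of_nonneg h fun ω _ _ => hw ω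

theorem le_mea_of_mem (hw : ∀ ω, 0 ≤ w ω) {ω : Ω} (h : ω ∈ A) : w ω ≤ mea w A :=
  single_le_sum (fun ω _ => hw ω) h

theorem mea_pos_iff (hw : ∀ ω, 0 < w ω) : 0 < mea w A ↔ A.Nonempty := by
  refine ⟨fun h => ?_, fun h => sum_pos (fun ω _ => hw ω) h⟩
  by_contra hA
  rw [not_nonempty_iff_eq_empty] at hA
  simp [hA, mea] at h

theorem mea_eq_zero_iff (hw : ∀ ω, 0 < w ω) : mea w A = 0 ↔ A = ∅ := by
  rw [← not_nonempty_iff_eq_empty, ← mea_pos_iff hw, not_lt,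
    (mea_nonneg (fun ω => (hw ω).le) A).ge_iff_eq']

theorem regularW_of_pos (hw : ∀ ω, 0 < w ω) : RegularW w := fun _ => (mea_eq_zero_iff hw).1

theorem RegularW.pos (hR : RegularW w) (hw : ∀ ω, 0 ≤ w ω) (ω : Ω) : 0 < w ω :=
  (hw ω).lt_of_ne' fun h => singleton_ne_empty ω (hR {ω} ((mea_singleton w ω).trans h))

theorem isProbWeight_inv_sum_smul [Fintype Ω] [Nonempty Ω] (hw : ∀ ω, 0 < w ω) :
    IsProbWeight ((∑ ω, w ω)⁻¹ • w) := by
  have htotal : 0 < ∑ ω, w ω := sum_pos (fun ω _ => hw ω) univ_nonempty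
  refine ⟨fun ω => mul_nonneg (inv_nonneg.2 htotal.le) (hw ω).le, ?_⟩
  simp only [Pi.smul_apply, smul_eq_mul, ← mul_sum, inv_mul_cancel₀ htotal.ne']

end Measure

section Stability

variable [DecidableEq Ω] {w : Ω → ℝ} {t : ℝ} {E X S A B : Finset Ω}

theorem stableFor_condMea_iff (hw : ∀ ω, 0 < w ω) (hE : E.Nonempty) :
    StableFor (condMea w E) t X ↔ X.Nonempty ∧ ∀ F : Finset Ω, (X ∩ F).Nonempty →
      (E ∩ F).Nonempty → t * mea w (E ∩ F) < mea w (E ∩ (X ∩ F)) := by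
  have hE_pos : 0 < mea w E := (mea_pos_iff hw).2 hE
  refine and_congr_right fun _ => forall₂_congr fun F _ => ?_
  simp only [condMea, div_pos_iff_of_pos_right hE_pos, mea_pos_iff hw,
    div_div_div_cancel_right₀ hE_pos.ne']
  exact forall_congr' fun hF => lt_div_iff₀ ((mea_pos_iff hw).2 hF)

/-- The odds form of `(μ_E, t)`-stability for subsets `X` of `E`: each single state of `X` already
outweighs `E \ X` by more than the odds `t : (1 - t)`. -/
def OddsStable (w : Ω → ℝ) (t : ℝ) (E X : Finset Ω) : Prop :=
  X ⊆ E ∧ X.Nonempty ∧ ∀ x ∈ X, t * mea w (E \ X) < (1 - t) * w x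

theorem oddsStable_self (hw : ∀ ω, 0 < w ω) (ht : t < 1) (hE : E.Nonempty) :
    OddsStable w t E E := by
  refine ⟨Subset.rfl, hE, fun x _ => ?_⟩
  rw [sdiff_self, bot_eq_empty, (mea_eq_zero_iff hw).2 rfl, mul_zero]
  exact mul_pos (sub_pos.2 ht) (hw x)

theorem oddsStable_union_singleton {a : Ω} (ha : a ∉ B) :
    OddsStable w t (B ∪ {a}) {a} ↔ t * mea w B < (1 - t) * w a := by
  have hsdiff : (B ∪ {a}) \ {a} = B := union_sdiff_cancel_right (disjoint_singleton_right.2 ha)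
  simp only [OddsStable, hsdiff, mem_singleton, forall_eq]
  exact ⟨fun h => h.2.2, fun h => ⟨subset_union_right, singleton_nonempty a, h⟩⟩

theorem OddsStable.inter (h : OddsStable w t A X) (hw : ∀ ω, 0 ≤ w ω) (ht : 0 ≤ t)
    (hXB : (X ∩ B).Nonempty) : OddsStable w t (A ∩ B) (X ∩ B) := by
  refine ⟨inter_subset_inter_right h.1, hXB, fun x hx => ?_⟩
  have hsub : (A ∩ B) \ (X ∩ B) ⊆ A \ X := by grind
  exact (mul_le_mul_of_nonneg_left (mea_mono hw hsub) ht).trans_lt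
    (h.2.2 x (mem_inter.1 hx).1)

theorem OddsStable.biUnion {ι : Type*} {s : Finset ι} {X : ι → Finset Ω} (hw : ∀ ω, 0 ≤ w ω)
    (ht : 0 ≤ t) (hs : s.Nonempty) (h : ∀ i ∈ s, OddsStable w t (A ∪ X i) (X i)) :
    OddsStable w t (A ∪ s.biUnion X) (s.biUnion X) := by
  refine ⟨subset_union_right, hs.biUnion fun i hi => (h i hi).2.1, fun x hx => ?_⟩
  obtain ⟨i, hi, hxi⟩ := mem_biUnion.1 hx
  have hsub : (A ∪ s.biUnion X) \ s.biUnion X ⊆ (A ∪ X i) \ X i := by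
    rw [union_sdiff_right, union_sdiff_right]
    exact sdiff_subset_sdiff Subset.rfl (subset_biUnion_of_mem X hi)
  exact (mul_le_mul_of_nonneg_left (mea_mono hw hsub) ht).trans_lt ((h i hi).2.2 x hxi)

theorem StableFor.oddsStable_inter (h : StableFor (condMea w E) t X) (hw : ∀ ω, 0 < w ω)
    (ht : 0 ≤ t) (hE : E.Nonempty) : OddsStable w t E (E ∩ X) := by
  obtain ⟨hX, h⟩ := (stableFor_condMea_iff hw hE).1 h
  have hw' (ω) : 0 ≤ w ω := (hw ω).le
  refine ⟨inter_subset_left, ?_, fun x hx => ?_⟩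
  · have hE_inter : E ∩ (E ∪ X) = E := inter_eq_left.2 subset_union_left
    have hX_inter : X ∩ (E ∪ X) = X := inter_eq_left.2 subset_union_right
    have hlt := h (E ∪ X) (hX_inter.symm ▸ hX) (hE_inter.symm ▸ hE)
    rw [hE_inter, hX_inter] at hlt
    exact (mea_pos_iff hw).1 ((mul_nonneg ht (mea_nonneg hw' E)).trans_lt hlt)
  · obtain ⟨hxE, hxX⟩ := mem_inter.1 hx
    -- The extremal test set: a single state of `X` against everything outside `X`.
    have hlt := h (insert x (E \ X)) ⟨x, by simp [hxX]⟩ ⟨x, by simp [hxE]⟩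
    have hE_inter : E ∩ insert x (E \ X) = insert x (E \ X) := by grind
    have hEX_inter : E ∩ (X ∩ insert x (E \ X)) = {x} := by grind
    have hinsert : mea w (insert x (E \ X)) = w x + mea w (E \ X) :=
      sum_insert (by simp [hxX])
    rw [hE_inter, hEX_inter, hinsert, mea_singleton] at hlt
    rw [sdiff_inter_self_left]
    linarith

theorem OddsStable.stableFor (h : OddsStable w t E X) (hw : ∀ ω, 0 < w ω) (ht₀ : 0 ≤ t)
    (ht₁ : t ≤ 1) : StableFor (condMea w E) t X := by
  obtain ⟨hXE, hX, hodds⟩ := h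
  have hw' (ω) : 0 ≤ w ω := (hw ω).le
  refine (stableFor_condMea_iff hw (hX.mono hXE)).2 ⟨hX, fun F ⟨x, hx⟩ _ => ?_⟩
  set m := mea w (E ∩ (X ∩ F))
  have hxX : x ∈ X := (mem_inter.1 hx).1
  have hx_le : w x ≤ m := le_mea_of_mem hw' (mem_inter.2 ⟨hXE hxX, hx⟩)
  have hF_le : mea w (E ∩ F) ≤ m + mea w (E \ X) := by
    refine (mea_mono hw' (B := E ∩ (X ∩ F) ∪ E \ X) (by grind)).trans_eq (sum_union ?_)
    exact disjoint_left.2 (by grind)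
  calc t * mea w (E ∩ F) ≤ t * (m + mea w (E \ X)) := mul_le_mul_of_nonneg_left hF_le ht₀
    _ = t * m + t * mea w (E \ X) := mul_add ..
    _ < t * m + (1 - t) * w x := add_lt_add_right (hodds x hxX) _
    _ ≤ t * m + (1 - t) * m := by gcongr
    _ = m := by ring

theorem isLeastStable_condMea_iff (hw : ∀ ω, 0 < w ω) (ht₀ : 0 ≤ t) (ht₁ : t < 1)
    (hE : E.Nonempty) :
    IsLeastStable (condMea w E) t S ↔ IsLeast {X | OddsStable w t E X} S := by
  constructor
  · rintro ⟨hS, hleast⟩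
    have hSE : S ⊆ E := hleast E ((oddsStable_self hw ht₁ hE).stableFor hw ht₀ ht₁.le)
    have hS_odds := hS.oddsStable_inter hw ht₀ hE
    rw [inter_eq_right.2 hSE] at hS_odds
    exact ⟨hS_odds, fun X hX => hleast X (OddsStable.stableFor hX hw ht₀ ht₁.le)⟩
  · rintro ⟨hS, hleast⟩
    refine ⟨OddsStable.stableFor hS hw ht₀ ht₁.le, fun X hX => ?_⟩
    exact (hleast (hX.oddsStable_inter hw ht₀ hE)).trans inter_subset_right

end Stability

section OddsRepresents

variable [DecidableEq Ω] {σ : Finset Ω → Finset Ω} {w : Ω → ℝ} {t : ℝ}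

/-- Representation of `σ` by positive weights `w` for threshold `t`, in odds form: `σ E` is the
`⊆`-least odds-stable subset of `E`, where `E = ∅` has none and is sent to `∅`. -/
def OddsRepresents (w : Ω → ℝ) (t : ℝ) (σ : Finset Ω → Finset Ω) : Prop :=
  σ ∅ = ∅ ∧ ∀ E : Finset Ω, E.Nonempty → IsLeast {X | OddsStable w t E X} (σ E)

theorem representsAt_iff_oddsRepresents (hw : ∀ ω, 0 < w ω) (ht₀ : 0 ≤ t) (ht₁ : t < 1) :
    RepresentsAt w t σ ↔ OddsRepresents w t σ := by
  simp only [RepresentsAt, forall_and, mea_eq_zero_iff hw, mea_pos_iff hw, forall_eq]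
  rw [and_comm]
  exact and_congr_right fun _ => forall₂_congr fun _ hE =>
    isLeastStable_condMea_iff hw ht₀ ht₁ hE

namespace OddsRepresents

theorem selA1 (h : OddsRepresents w t σ) : SelA1 σ := by
  intro X hX
  by_contra hne
  exact (h.2 X (nonempty_iff_ne_empty.2 hne)).1.2.1.ne_empty hX

theorem selA2 (h : OddsRepresents w t σ) : SelA2 σ := by
  intro X
  obtain rfl | hX := X.eq_empty_or_nonempty
  · exact h.1.le
  · exact (h.2 X hX).1.1

theorem selA3 (h : OddsRepresents w t σ) (hw : ∀ ω, 0 ≤ w ω) (ht : 0 ≤ t) : SelA3 σ := by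
  intro A B hAB
  have hne : (A ∩ B).Nonempty := hAB.mono (inter_subset_inter_right (h.selA2 A))
  exact (h.2 _ hne).2 ((h.2 A (hne.mono inter_subset_left)).1.inter hw ht hAB)

theorem selA4 (h : OddsRepresents w t σ) (hw : ∀ ω, 0 ≤ w ω) (ht : 0 ≤ t) : SelA4 σ := by
  intro n A X hX
  obtain rfl | hA := A.eq_empty_or_nonempty
  · simpa using h.selA2 (univ.biUnion X)
  have hX_stable (i) : OddsStable w t (A ∪ X i) (X i) := by
    have hσ : OddsStable w t (A ∪ X i) (σ (A ∪ X i)) := (h.2 _ (hA.mono subset_union_left)).1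
    rwa [hX i] at hσ
  exact (h.2 _ (hA.mono subset_union_left)).2
    (OddsStable.biUnion hw ht univ_nonempty fun i _ => hX_stable i)

theorem succS_iff (h : OddsRepresents w t σ) {a : Ω} {B : Finset Ω} :
    succS σ a B ↔ a ∉ B ∧ t * mea w B < (1 - t) * w a := by
  refine and_congr_right fun ha => ?_
  rw [← oddsStable_union_singleton ha]
  obtain ⟨hσ, hleast⟩ := h.2 (B ∪ {a}) ⟨a, by simp⟩
  refine ⟨fun hσ_eq => ?_, fun hstable => ?_⟩
  · rwa [hσ_eq] at hσ
  · exact (subset_singleton_iff.1 (hleast hstable)).resolve_left hσ.2.1.ne_empty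

end OddsRepresents

end OddsRepresents

section InducedOrder

variable {σ : Finset Ω → Finset Ω}

theorem SelA1.eq_singleton (h₁ : SelA1 σ) {X : Finset Ω} {a : Ω} (hX : X.Nonempty)
    (h : σ X ⊆ {a}) : σ X = {a} :=
  (subset_singleton_iff.1 h).resolve_left fun hσ => hX.ne_empty (h₁ X hσ)

variable [DecidableEq Ω]

theorem not_succS_iff_succeqS {a : Ω} {B : Finset Ω} : ¬ succS σ a B ↔ succeqS σ B a := by
  rw [succS, succeqS, not_and_or, not_not]

theorem not_succS_singleton_of_succS_singleton {a b : Ω} (h : succS σ a {b}) :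
    ¬ succS σ b {a} := by
  rintro ⟨-, hba⟩
  rw [union_comm, h.2, singleton_inj] at hba
  exact h.1 (mem_singleton.2 hba)

theorem geStar_singleton_right_iff {A : Finset Ω} {b : Ω} :
    geStar σ A {b} ↔ ¬ succS σ b A := by
  constructor
  · rintro (⟨a, rfl, hab⟩ | ⟨b', hb, hA⟩)
    · exact not_succS_singleton_of_succS_singleton hab
    · rwa [singleton_injective hb, not_succS_iff_succeqS]
  · exact fun h => Or.inr ⟨b, rfl, not_succS_iff_succeqS.1 h⟩

theorem succS_empty (h₁ : SelA1 σ) (h₂ : SelA2 σ) (a : Ω) : succS σ a ∅ := by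
  refine ⟨notMem_empty a, h₁.eq_singleton ⟨a, by simp⟩ ?_⟩
  simpa using h₂ {a}

theorem succS_sdiff_of_mem (h₁ : SelA1 σ) (h₂ : SelA2 σ) (h₃ : SelA3 σ) {E : Finset Ω} {x : Ω}
    (hx : x ∈ σ E) : succS σ x (E \ σ E) := by
  have hxE : x ∈ E := h₂ E hx
  have hE_inter : E ∩ (E \ σ E ∪ {x}) = E \ σ E ∪ {x} := by grind
  have hσ_inter : σ E ∩ (E \ σ E ∪ {x}) = {x} := by grind
  have hσ := h₃ E (E \ σ E ∪ {x}) (hσ_inter.symm ▸ singleton_nonempty x)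
  rw [hE_inter, hσ_inter] at hσ
  exact ⟨by simp [hx], h₁.eq_singleton ⟨x, by simp⟩ hσ⟩

theorem SelA4.subset_of_forall_succS (h₄ : SelA4 σ) {E X : Finset Ω} (hXE : X ⊆ E)
    (hX : X.Nonempty) (h : ∀ x ∈ X, succS σ x (E \ X)) : σ E ⊆ X := by
  obtain ⟨n, hn⟩ := Nat.exists_eq_succ_of_ne_zero hX.card_pos.ne'
  let e := X.equivFinOfCardEq hn
  have hunion : univ.biUnion (fun i => {(e.symm i : Ω)}) = X := by
    ext x
    simp [e.symm.exists_congr_left]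
  have hσ := h₄ n (E \ X) (fun i => {(e.symm i : Ω)}) fun i => (h _ (e.symm i).2).2
  rwa [hunion, sdiff_union_of_subset hXE] at hσ

end InducedOrder

section Balanced

variable {n : ℕ} {A B : Fin n → Finset Ω}

theorem count_val [DecidableEq Ω] (C : Finset Ω) (ω : Ω) :
    C.val.count ω = if ω ∈ C then 1 else 0 :=
  Multiset.count_eq_of_nodup C.nodup

theorem balancedSeq_iff_sum_val_eq :
    BalancedSeq A B ↔ ∑ i, (A i).val = ∑ i, (B i).val := by
  classical
  have hcount (C : Fin n → Finset Ω) (ω : Ω) :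
      (∑ i, (C i).val).count ω = Nat.card {i // ω ∈ C i} := by
    simp only [Multiset.count_sum', count_val, Nat.card_eq_fintype_card, Fintype.card_subtype,
      card_filter]
  simp only [BalancedSeq, Multiset.ext, hcount]

theorem BalancedSeq.sum_sum_eq {M : Type*} [AddCommMonoid M] (h : BalancedSeq A B) (f : Ω → M) :
    ∑ i, ∑ ω ∈ A i, f ω = ∑ i, ∑ ω ∈ B i, f ω := by
  have hmap (C : Fin n → Finset Ω) :
      ∑ i, ∑ ω ∈ C i, f ω = ((∑ i, (C i).val).map f).sum := by
    rw [← Multiset.coe_mapAddMonoidHom, ← Multiset.coe_sumAddMonoidHom, map_sum, map_sum]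
    rfl
  rw [hmap, hmap, balancedSeq_iff_sum_val_eq.1 h]

theorem BalancedSeq.card_eq_one (h : BalancedSeq A B) (hA : ∀ i, (A i).Nonempty)
    (hB : ∀ i, #(B i) = 1) (i : Fin n) : #(A i) = 1 := by
  have hsum : ∑ i, #(B i) = ∑ i, #(A i) := by
    simpa only [card_eq_sum_ones] using (h.sum_sum_eq fun _ => (1 : ℕ)).symm
  rw [← hB i, eq_comm]
  refine (sum_eq_sum_iff_of_le fun j _ => ?_).1 hsum i (mem_univ i)
  exact (hB j).trans_le (hA j).card_pos

theorem ScottAx.geStar_swap_of_mem [DecidableEq Ω] {σ : Finset Ω → Finset Ω} (hS : ScottAx σ)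
    {ι : Type*} {M : Multiset ι} {A B : ι → Finset Ω} (h : ∀ i ∈ M, geStar σ (A i) (B i))
    (hbal : (M.map fun i => (A i).val).sum = (M.map fun i => (B i).val).sum) {i : ι}
    (hi : i ∈ M) : geStar σ (B i) (A i) := by
  induction M using Quot.inductionOn with | h l => ?_
  cases l with
  | nil => simp at hi
  | cons j l =>
    obtain ⟨k, rfl⟩ := List.get_of_mem hi
    refine hS l.length (fun k => A ((j :: l).get k)) (fun k => B ((j :: l).get k)) ?_
      (fun k => h _ (List.get_mem (j :: l) k)) k
    rw [balancedSeq_iff_sum_val_eq]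
    have hsum (C : ι → Finset Ω) : ∑ k, (C ((j :: l).get k)).val =
        (((j :: l : List ι) : Multiset ι).map fun i => (C i).val).sum := by
      rw [Multiset.map_coe, Multiset.sum_coe]
      exact Fin.sum_univ_fun_getElem (j :: l) fun i => (C i).val
    exact (hsum A).trans (hbal.trans (hsum B).symm)

end Balanced

section RepresentsOrder

variable [DecidableEq Ω] {σ : Finset Ω → Finset Ω} {w : Ω → ℝ}

/-- The weights `w` represent the order induced by `σ`: `ω ≻_σ X` iff `μ(X) < μ({ω})`. This is the
link between Scott's axiom and representation for threshold `1/2`. -/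
def RepresentsOrder (w : Ω → ℝ) (σ : Finset Ω → Finset Ω) : Prop :=
  ∀ a B, succS σ a B ↔ mea w B < w a

namespace RepresentsOrder

theorem smul (h : RepresentsOrder w σ) {c : ℝ} (hc : 0 < c) : RepresentsOrder (c • w) σ := by
  intro a B
  rw [h a B, mea_smul, Pi.smul_apply, smul_eq_mul, mul_lt_mul_iff_right₀ hc]

theorem pos (h : RepresentsOrder w σ) (h₁ : SelA1 σ) (h₂ : SelA2 σ) (a : Ω) : 0 < w a :=
  (h a ∅).1 (succS_empty h₁ h₂ a)

theorem geStar_singleton_right_iff (h : RepresentsOrder w σ) {A : Finset Ω} {b : Ω} :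
    geStar σ A {b} ↔ w b ≤ mea w A := by
  rw [_root_.geStar_singleton_right_iff, h b A, not_lt]

theorem mea_le_of_geStar (h : RepresentsOrder w σ) {A B : Finset Ω} (hAB : geStar σ A B) :
    mea w B ≤ mea w A := by
  obtain ⟨a, rfl, haB⟩ | ⟨b, rfl, -⟩ := id hAB
  · rw [mea_singleton]
    exact ((h a B).1 haB).le
  · rw [mea_singleton]
    exact h.geStar_singleton_right_iff.1 hAB

theorem card_eq_one_of_geStar (h : RepresentsOrder w σ) {A B : Finset Ω} (hAB : geStar σ A B)
    (hmea : mea w A ≤ mea w B) : #B = 1 := by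
  obtain ⟨a, rfl, haB⟩ | ⟨b, rfl, -⟩ := hAB
  · rw [mea_singleton] at hmea
    exact absurd ((h a B).1 haB) hmea.not_gt
  · exact card_singleton b

theorem scottAx (h : RepresentsOrder w σ) (hw : ∀ ω, 0 < w ω) : ScottAx σ := by
  intro n A B hbal hge i
  have hmea (j) : mea w (B j) = mea w (A j) :=
    (sum_eq_sum_iff_of_le fun j _ => h.mea_le_of_geStar (hge j)).1 (hbal.sum_sum_eq w).symm
      j (mem_univ j)
  have hB (j) : #(B j) = 1 := h.card_eq_one_of_geStar (hge j) (hmea j).ge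
  have hA (j) : (A j).Nonempty := by
    rw [← mea_pos_iff hw, ← hmea j, mea_pos_iff hw, ← card_pos, hB j]
    exact one_pos
  obtain ⟨a, ha⟩ := Finset.card_eq_one.1 (hbal.card_eq_one hA hB i)
  rw [ha, h.geStar_singleton_right_iff, hmea i, ha, mea_singleton]

theorem oddsRepresents (h : RepresentsOrder w σ) (h₁ : SelA1 σ) (h₂ : SelA2 σ) (h₃ : SelA3 σ)
    (h₄ : SelA4 σ) : OddsRepresents w (1 / 2) σ := by
  have hodds (E X : Finset Ω) :
      OddsStable w (1 / 2) E X ↔ X ⊆ E ∧ X.Nonempty ∧ ∀ x ∈ X, succS σ x (E \ X) := by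
    simp only [OddsStable, h _ _]
    norm_num
  refine ⟨subset_empty.1 (h₂ ∅), fun E hE => ⟨?_, fun X hX => ?_⟩⟩
  · have hσ : (σ E).Nonempty := nonempty_iff_ne_empty.2 fun hσ => hE.ne_empty (h₁ E hσ)
    exact (hodds _ _).2 ⟨h₂ E, hσ, fun x => succS_sdiff_of_mem h₁ h₂ h₃⟩
  · obtain ⟨hXE, hX, hsucc⟩ := (hodds _ _).1 hX
    exact h₄.subset_of_forall_succS hXE hX hsucc

end RepresentsOrder

theorem OddsRepresents.representsOrder (h : OddsRepresents w (1 / 2) σ) (hw : ∀ ω, 0 ≤ w ω) :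
    RepresentsOrder w σ := by
  intro a B
  have hhalf : 1 / 2 * mea w B < (1 - 1 / 2) * w a ↔ mea w B < w a := by norm_num
  rw [h.succS_iff, hhalf, and_iff_right_iff_imp]
  exact fun hlt haB => hlt.not_ge (le_mea_of_mem hw haB)

end RepresentsOrder

section ScottRepresentation

/-- The functional `v ↦ ∑ ω ∈ A, v ω` on rational weights; through it, balancedness
becomes a linear relation. -/
def massFunctional (A : Finset Ω) : Module.Dual ℚ (Ω → ℚ) := ∑ ω ∈ A, LinearMap.proj ω

theorem massFunctional_apply (A : Finset Ω) (v : Ω → ℚ) : massFunctional A v = ∑ ω ∈ A, v ω := by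
  simp [massFunctional]

theorem sum_map_massFunctional_single [DecidableEq Ω] {ι : Type*} (M : Multiset ι)
    (C : ι → Finset Ω) (ω : Ω) : (M.map fun i => massFunctional (C i)).sum (Pi.single ω 1) =
      ((M.map fun i => (C i).val).sum.count ω : ℚ) := by
  induction M using Multiset.induction_on with
  | empty => simp
  | cons i M ih => simp [massFunctional_apply, Pi.single_apply, count_val, ih]

theorem sum_val_eq_of_sum_massFunctional_eq {ι : Type*} {M : Multiset ι} {A B : ι → Finset Ω}
    (h : (M.map fun i => massFunctional (A i)).sum = (M.map fun i => massFunctional (B i)).sum) :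
    (M.map fun i => (A i).val).sum = (M.map fun i => (B i).val).sum := by
  classical
  ext ω
  have hω := LinearMap.congr_fun h (Pi.single ω 1)
  rwa [sum_map_massFunctional_single, sum_map_massFunctional_single, Nat.cast_inj] at hω

theorem ScottAx.exists_representsOrder [Finite Ω] [DecidableEq Ω] {σ : Finset Ω → Finset Ω}
    (hS : ScottAx σ) : ∃ w : Ω → ℝ, RepresentsOrder w σ := by
  let a (p : {p : Finset Ω × Finset Ω // geStar σ p.1 p.2}) :=
    massFunctional p.1.1 - massFunctional p.1.2
  obtain ⟨v, hweak, hstrict⟩ := exists_forall_nonneg_and_forall_pos a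
    {p | ¬ geStar σ p.1.2 p.1.1} fun M hM p hp hp_strict => by
      refine hp_strict (hS.geStar_swap_of_mem (A := fun q => q.1.1) (B := fun q => q.1.2)
        (fun q _ => q.2) ?_ hp)
      rw [Multiset.sum_map_sub, sub_eq_zero] at hM
      exact sum_val_eq_of_sum_massFunctional_eq hM
  simp only [a, LinearMap.sub_apply, massFunctional_apply, sub_nonneg, sub_pos] at hweak hstrict
  refine ⟨fun ω => v ω, fun b B => ?_⟩
  suffices succS σ b B ↔ ∑ ω ∈ B, v ω < v b by
    rw [this, mea, ← Rat.cast_sum, Rat.cast_lt]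
  constructor
  · intro hbB
    have hswap : ¬ geStar σ B {b} := fun hBb => geStar_singleton_right_iff.1 hBb hbB
    simpa using hstrict ⟨({b}, B), Or.inl ⟨b, rfl, hbB⟩⟩ hswap
  · contrapose!
    intro hbB
    simpa using hweak ⟨(B, {b}), geStar_singleton_right_iff.2 hbB⟩

end ScottRepresentation

/-- Representation theorem for selection structures, Theorem `REPSEL`:
a selection function satisfying (S1), (S2), (S3), (S4ₙ) and (Scott) is represented by some
regular probability measure for threshold 1/2; conversely, any selection function represented
by a regular probability measure for threshold 1/2 satisfies those axioms. -/
theorem stmt10 [Fintype Ω] [DecidableEq Ω] [Nonempty Ω] (σ : Finset Ω → Finset Ω) :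
    ((SelA1 σ ∧ SelA2 σ ∧ SelA3 σ ∧ SelA4 σ ∧ ScottAx σ) →
        ∃ w : Ω → ℝ, IsProbWeight w ∧ RegularW w ∧ RepresentsAt w (1 / 2) σ) ∧
    (∀ w : Ω → ℝ, IsProbWeight w → RegularW w → RepresentsAt w (1 / 2) σ →
        (SelA1 σ ∧ SelA2 σ ∧ SelA3 σ ∧ SelA4 σ ∧ ScottAx σ)) := by
  constructor
  · rintro ⟨h₁, h₂, h₃, h₄, hS⟩
    obtain ⟨v, hv⟩ := hS.exists_representsOrder
    have hv_pos := hv.pos h₁ h₂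
    have htotal : 0 < ∑ ω, v ω := sum_pos (fun ω _ => hv_pos ω) univ_nonempty
    have hw := hv.smul (inv_pos.2 htotal)
    have hw_pos := hw.pos h₁ h₂
    exact ⟨_, isProbWeight_inv_sum_smul hv_pos, regularW_of_pos hw_pos,
      (representsAt_iff_oddsRepresents hw_pos (by norm_num) (by norm_num)).2
        (hw.oddsRepresents h₁ h₂ h₃ h₄)⟩
  · intro w hP hR hrep
    have hw := hR.pos hP.1
    have h := (representsAt_iff_oddsRepresents hw (by norm_num) (by norm_num)).1 hrep
    exact ⟨h.selA1, h.selA2, h.selA3 hP.1 (by norm_num), h.selA4 hP.1 (by norm_num),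
      (h.representsOrder hP.1).scottAx hw⟩
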